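/- Let A and C be finite abelian groups of odd order and ψ : C × C → A an equalized 2-cocycle. For every coadjoint orbit Ω, the cardinality of Ω is a perfect square n², and the two-sided ideal V_Ω of ℂ[B_ψ] is isomorphic as a ℂ-algebra to the algebra of n × n complex matrices; in particular dim_ℂ V_Ω = #Ω and the irreducible representation of B_ψ corresponding to Ω has dimension n = √(#Ω). -/

import Mathlib

/-- A 2-cocycle on `C` with values in `A` (trivial action of `C` on `A`). -/
def IsCocycle {A C : Type*} [AddCommGroup A] [AddCommGroup C] (ψ : C → C → A) : Prop :=
  ∀ c₁ c₂ c₃ : C, ψ c₁ c₂ + ψ (c₁ + c₂) c₃ = ψ c₁ (c₂ + c₃) + ψ c₂ c₃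

/-- A 2-cocycle `ψ` is equalized iff `ψ(c, -c) = 0` for all `c`. -/
def Equalized {A C : Type*} [AddCommGroup A] [AddCommGroup C] (ψ : C → C → A) : Prop :=
  ∀ c : C, ψ c (-c) = 0

/-- The skew-symmetrization `η(c₁,c₂) = ψ(c₁,c₂) - ψ(c₂,c₁)` of a 2-cocycle. -/
def eta {A C : Type*} [AddCommGroup A] [AddCommGroup C] (ψ : C → C → A)
    (c₁ c₂ : C) : A :=
  ψ c₁ c₂ - ψ c₂ c₁

/-- The addition `⊞` on `A × C` given by `φ(c₁,c₂) = (ψ(c₁,c₂)+ψ(c₂,c₁))/2`,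
where `half` is the halving map of the 2-divisible group `A`. -/
def boxAdd {A C : Type*} [AddCommGroup A] [AddCommGroup C] (half : A → A)
    (ψ : C → C → A) (x y : A × C) : A × C :=
  (x.1 + y.1 + half (ψ x.2 y.2 + ψ y.2 x.2), x.2 + y.2)

/-- A character of `(A × C, ⊞)`: a map `χ : A × C → ℂˣ` with `χ(x ⊞ y) = χ(x)·χ(y)`. -/
def IsChar {A C : Type*} [AddCommGroup A] [AddCommGroup C] (half : A → A)
    (ψ : C → C → A) (χ : A × C → ℂˣ) : Prop :=
  ∀ x y : A × C, χ (boxAdd half ψ x y) = χ x * χ y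

/-- The coadjoint action of `b ∈ B_ψ` on characters: `(b • χ)(a,c) = χ(a - η(c_b,c), c)`. -/
def coact {A C : Type*} [AddCommGroup A] [AddCommGroup C] (ψ : C → C → A)
    (b : A × C) (χ : A × C → ℂˣ) : A × C → ℂˣ :=
  fun x => χ (x.1 - eta ψ b.2 x.2, x.2)

/-- A coadjoint orbit: the orbit of some character `χ₀` under the coadjoint action. -/
def IsCoadjointOrbit {A C : Type*} [AddCommGroup A] [AddCommGroup C] (half : A → A)
    (ψ : C → C → A) (Ω : Set (A × C → ℂˣ)) : Prop :=
  ∃ χ₀ : A × C → ℂˣ, IsChar half ψ χ₀ ∧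
    Ω = {χ : A × C → ℂˣ | ∃ b : A × C, χ = coact ψ b χ₀}

/-- The element `X_χ = ∑_{x ∈ A × C} χ(x)·x` of the group algebra `ℂ[B_ψ]`,
where `B_ψ` is `A × C` endowed with a group structure. -/
noncomputable def Xelem {A C : Type*} [AddCommGroup A] [AddCommGroup C]
    [Fintype A] [Fintype C] [Group (A × C)] (χ : A × C → ℂˣ) :
    MonoidAlgebra ℂ (A × C) :=
  ∑ x : A × C, MonoidAlgebra.single x (χ x : ℂ)

/-- The subspace `V_Ω = span_ℂ {X_χ : χ ∈ Ω}` of `ℂ[B_ψ]`. -/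
noncomputable def Vorb {A C : Type*} [AddCommGroup A] [AddCommGroup C]
    [Fintype A] [Fintype C] [Group (A × C)] (Ω : Set (A × C → ℂˣ)) :
    Submodule ℂ (MonoidAlgebra ℂ (A × C)) :=
  Submodule.span ℂ (Xelem '' Ω)


theorem simple_of_sep {R ι κ : Type*} [Ring R] [Nontrivial R] [Algebra ℂ R] [Fintype ι]
    (v : ι → Rˣ) (w : κ → Rˣ) (β : κ → ι → ℂ)
    (hspan : Submodule.span ℂ (Set.range (fun i => (v i : R))) = ⊤)
    (hcomm : ∀ k i, (w k : R) * v i = β k i • ((v i : R) * w k))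
    (hsep : ∀ i j, i ≠ j → ∃ k, β k i ≠ β k j) : IsSimpleRing R := by
  classical
  have key : ∀ (I : TwoSidedIdeal R) (S : Finset ι) (a : ι → ℂ),
      ∑ i ∈ S, a i • (v i : R) ∈ I → (∃ i ∈ S, a i ≠ 0) → (1 : R) ∈ I := by
    intro I S
    induction S using Finset.induction_on with
    | empty => simp
    | insert j S hj ih =>
      intro a hx hne
      by_cases hS : ∃ i ∈ S, a i ≠ 0
      · obtain ⟨i, hi, hai⟩ := hS
        have hij : i ≠ j := fun h => hj (h ▸ hi)
        obtain ⟨k, hk⟩ := hsep i j hij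
        apply ih (fun d => a d * (β k d - β k j)) _ ⟨i, hi, mul_ne_zero hai (sub_ne_zero.2 hk)⟩
        have hconj : ∀ d, (w k : R) * (v d : R) * ((w k)⁻¹ : Rˣ) = β k d • (v d : R) := by
          intro d
          rw [hcomm, smul_mul_assoc, Units.mul_inv_cancel_right]
        have h1 := I.sub_mem (I.mul_mem_right _ (((w k)⁻¹ : Rˣ) : R) (I.mul_mem_left (w k : R) _ hx))
          (I.mul_mem_left (algebraMap ℂ R (β k j)) _ hx)
        convert h1 using 1
        rw [Finset.mul_sum, Finset.sum_mul, Finset.mul_sum, ← Finset.sum_sub_distrib,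
          Finset.sum_insert hj]
        have h2 : ∀ d, (w k : R) * a d • (v d : R) * (((w k)⁻¹ : Rˣ) : R)
            - algebraMap ℂ R (β k j) * a d • (v d : R) = (a d * (β k d - β k j)) • (v d : R) := by
          intro d
          rw [mul_smul_comm, smul_mul_assoc, hconj, ← Algebra.smul_def, smul_smul, smul_smul,
            ← sub_smul]
          congr 1; ring
        simp only [h2]
        simp
      · push Not at hS
        have haj : a j ≠ 0 := by
          obtain ⟨i, hi, hai⟩ := hne
          rcases Finset.mem_insert.1 hi with rfl | h
          · exact hai
          · exact absurd (hS i h) hai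
        rw [Finset.sum_insert hj, Finset.sum_eq_zero (fun i hi => by rw [hS i hi, zero_smul]),
          add_zero] at hx
        have := I.mul_mem_left ((a j)⁻¹ • (((v j)⁻¹ : Rˣ) : R)) _ hx
        rwa [smul_mul_smul_comm, inv_mul_cancel₀ haj, one_smul, Units.inv_mul] at this
  apply IsSimpleRing.of_eq_bot_or_eq_top
  intro I
  by_cases hI : I = ⊥
  · exact Or.inl hI
  right
  obtain ⟨x, hxI, hx0⟩ : ∃ x ∈ I, x ≠ 0 := by
    by_contra h
    push Not at h
    apply hI
    rw [eq_bot_iff]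
    intro x hx
    rw [h x hx]
    exact TwoSidedIdeal.zero_mem _
  have hx : x ∈ Submodule.span ℂ (Set.range (fun i => (v i : R))) := hspan ▸ Submodule.mem_top
  obtain ⟨a, rfl⟩ := (Submodule.mem_span_range_iff_exists_fun ℂ).1 hx
  have h1 := key I Finset.univ a hxI (by
    by_contra h
    push Not at h
    exact hx0 (Finset.sum_eq_zero fun i hi => by rw [h i hi, zero_smul]))
  rw [eq_top_iff]
  intro y _
  simpa using I.mul_mem_left y 1 h1

section
variable {A C : Type*} [AddCommGroup A] [AddCommGroup C]

theorem psi_zero_right {ψ : C → C → A} (hψ : IsCocycle ψ) (heq : Equalized ψ) (c : C) :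
    ψ c 0 = 0 := by
  have h0 : ψ 0 0 = 0 := by simpa using heq 0
  have := hψ c 0 0
  simp only [add_zero, h0] at this
  simpa using this

theorem psi_zero_left {ψ : C → C → A} (hψ : IsCocycle ψ) (heq : Equalized ψ) (c : C) :
    ψ 0 c = 0 := by
  have h0 : ψ 0 0 = 0 := by simpa using heq 0
  have := hψ 0 0 c
  simp only [zero_add, h0] at this
  simpa using this

theorem eta_add_left {ψ : C → C → A} (hψ : IsCocycle ψ) (a b c : C) :
    eta ψ (a + b) c = eta ψ a c + eta ψ b c := by
  have h1 := hψ a b c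
  have h2 := hψ c a b
  have h3 := hψ a c b
  unfold eta
  rw [add_comm c a] at h2
  rw [add_comm c b] at h3
  grind

theorem eta_swap {ψ : C → C → A} (a b : C) : eta ψ a b = - eta ψ b a := by
  simp [eta]

theorem eta_add_right {ψ : C → C → A} (hψ : IsCocycle ψ) (a b c : C) :
    eta ψ a (b + c) = eta ψ a b + eta ψ a c := by
  rw [eta_swap, eta_add_left hψ, eta_swap a b, eta_swap a c]; abel

theorem eta_zero_left {ψ : C → C → A} (hψ : IsCocycle ψ) (c : C) : eta ψ 0 c = 0 := by
  have := eta_add_left hψ 0 0 c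
  simpa using this

theorem eta_nsmul_left {ψ : C → C → A} (hψ : IsCocycle ψ) (n : ℕ) (a c : C) :
    eta ψ (n • a) c = n • eta ψ a c := by
  induction n with
  | zero => simp [eta_zero_left hψ]
  | succ k ih => rw [succ_nsmul, eta_add_left hψ, ih, succ_nsmul]

theorem eta_self {ψ : C → C → A} (a : C) : eta ψ a a = 0 := by simp [eta]

/-- Explicit halving. -/
theorem half_eq [Fintype A] (hA : Odd (Fintype.card A))
    {half : A → A} (hhalf : ∀ a : A, half a + half a = a) :
    ∃ m : ℕ, ∀ a, half a = m • a := by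
  obtain ⟨k, hk⟩ := hA
  have hinj : Function.Injective (fun a : A => a + a) :=
    Finite.injective_iff_surjective.2 (fun a => ⟨half a, hhalf a⟩)
  refine ⟨k + 1, fun a => hinj ?_⟩
  show half a + half a = (k+1) • a + (k+1) • a
  rw [hhalf, ← add_nsmul, show k + 1 + (k + 1) = Fintype.card A + 1 by omega, succ_nsmul,
    card_nsmul_eq_zero, zero_add]

theorem coact_coact {ψ : C → C → A} (hψ : IsCocycle ψ) (b d : A × C) (χ : A × C → ℂˣ) :
    coact ψ b (coact ψ d χ) = coact ψ (b + d) χ := by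
  funext x
  simp only [coact, Prod.snd_add, eta_add_left hψ, sub_sub]

theorem isChar_coact {half : A → A} {ψ : C → C → A} (hψ : IsCocycle ψ) {χ : A × C → ℂˣ}
    (h : IsChar half ψ χ) (b : A × C) : IsChar half ψ (coact ψ b χ) := by
  intro x y
  simp only [coact]
  rw [← h]
  congr 1
  simp only [boxAdd, eta_add_right hψ]
  congr 1
  abel

/-- Orthogonality. -/
theorem char_orth [Fintype A] [Fintype C] {half : A → A} {ψ : C → C → A}
    {χ χ' : A × C → ℂˣ} (h : IsChar half ψ χ) (h' : IsChar half ψ χ') (hne : χ' ≠ χ) :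
    ∑ x, (χ' x : ℂ) * ((χ x)⁻¹ : ℂˣ) = 0 := by
  obtain ⟨y, hy⟩ := Function.ne_iff.1 hne
  have hbij : Function.Bijective (fun x => boxAdd half ψ y x) := by
    apply Finite.injective_iff_bijective.1
    intro a b hab
    simp only [boxAdd, Prod.mk.injEq, add_right_inj] at hab
    obtain ⟨h1, h2⟩ := hab
    rw [h2] at h1
    ext
    · simpa using h1
    · exact h2
  have h1 := hbij.sum_comp (fun x => (χ' x : ℂ) * ((χ x)⁻¹ : ℂˣ))
  simp only [h y, h' y] at h1
  have h2 : ((χ' y : ℂ) * ((χ y)⁻¹ : ℂˣ)) * ∑ x, (χ' x : ℂ) * ((χ x)⁻¹ : ℂˣ)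
      = ∑ x, (χ' x : ℂ) * ((χ x)⁻¹ : ℂˣ) := by
    conv_rhs => rw [← h1]
    rw [Finset.mul_sum]
    refine Finset.sum_congr rfl fun x _ => ?_
    rw [mul_inv]; push_cast; ring
  by_contra h0
  have h3 := mul_right_cancel₀ h0 (h2.trans (one_mul _).symm)
  apply hy
  have : χ' y * (χ y)⁻¹ = 1 := Units.ext (by rw [Units.val_mul]; exact h3)
  exact mul_inv_eq_one.1 this

theorem char_vert {half : A → A} (m : ℕ) (hm : ∀ a, half a = m • a) {ψ : C → C → A}
    (hψ : IsCocycle ψ) (heq : Equalized ψ) {χ : A × C → ℂˣ} (h : IsChar half ψ χ) (a a' : A) (c : C) :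
    χ (a + a', c) = χ (a, 0) * χ (a', c) := by
  rw [← h]
  simp [boxAdd, hm, psi_zero_left hψ heq, psi_zero_right hψ heq]

variable [Fintype A] [Fintype C] [Group (A × C)]

theorem single_mul_Xelem {half : A → A} (m : ℕ) (hm : ∀ a, half a = m • a)
    (hhalf : ∀ a : A, half a + half a = a) {ψ : C → C → A}
    (hψ : IsCocycle ψ)
    (hmul : ∀ x y : A × C, x * y = (x.1 + y.1 + ψ x.2 y.2, x.2 + y.2))
    {χ : A × C → ℂˣ} (h : IsChar half ψ χ) (b : A × C) :
    MonoidAlgebra.single b (1 : ℂ) * Xelem χ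
      = (((χ b)⁻¹ : ℂˣ) : ℂ) • Xelem (coact ψ (0, m • b.2) χ) := by
  unfold Xelem
  rw [← Equiv.sum_comp (Equiv.mulLeft b) (fun x => MonoidAlgebra.single x
    ((coact ψ (0, m • b.2) χ x : ℂˣ) : ℂ)), Finset.mul_sum, Finset.smul_sum]
  refine Finset.sum_congr rfl fun x _ => ?_
  rw [MonoidAlgebra.single_mul_single, one_mul, MonoidAlgebra.smul_single, Equiv.coe_mulLeft]
  congr 1
  have : coact ψ (0, m • b.2) χ (b * x) = χ b * χ x := by
    rw [← h, coact, hmul]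
    congr 1
    simp only [boxAdd, eta_nsmul_left hψ, eta_add_right hψ, eta_self, zero_add]
    congr 1
    rw [add_sub_assoc]
    congr 1
    rw [← hm]
    have h1 : half (ψ b.2 x.2 + ψ x.2 b.2) + half (eta ψ b.2 x.2) = ψ b.2 x.2 := by
      rw [hm, hm, ← nsmul_add, ← hm]
      have : ψ b.2 x.2 + ψ x.2 b.2 + eta ψ b.2 x.2 = ψ b.2 x.2 + ψ b.2 x.2 := by
        unfold eta; abel
      rw [this, hm, nsmul_add, ← hm, hhalf]
    rw [sub_eq_iff_eq_add, h1]
  rw [this]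
  simp

theorem coeff_Xelem (χ : A × C → ℂˣ) (x : A × C) : (Xelem χ).coeff x = χ x := by
  classical
  simp [Xelem, Finsupp.single_apply]

theorem coeff_mul_Xelem {half : A → A} (m : ℕ) (hm : ∀ a, half a = m • a)
    {ψ : C → C → A} (hψ : IsCocycle ψ) (heq : Equalized ψ)
    (hmul : ∀ x y : A × C, x * y = (x.1 + y.1 + ψ x.2 y.2, x.2 + y.2))
    {χ χ' : A × C → ℂˣ} (h : IsChar half ψ χ) :
    (Xelem χ' * Xelem χ).coeff 1 = ∑ x, (χ' x : ℂ) * ((χ x)⁻¹ : ℂˣ) := by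
  have h1 : (1 : A × C) = (0, 0) := by
    have : ((0, 0) : A × C) * (0, 0) = (0, 0) := by
      rw [hmul]; simp [psi_zero_left hψ heq]
    exact (mul_eq_left.1 this).symm
  have hχ1 : χ 1 = 1 := by
    have := h (0,0) (0,0)
    rw [h1]
    simpa [boxAdd, hm, psi_zero_left hψ heq] using this
  have hinv : ∀ x : A × C, χ x⁻¹ = (χ x)⁻¹ := by
    intro x
    have h2 : x⁻¹ = (-x.1, -x.2) := by
      rw [inv_eq_iff_mul_eq_one, hmul, h1]
      simp [heq x.2]
    have h3 := h x x⁻¹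
    have h4 : boxAdd half ψ x x⁻¹ = 1 := by
      have := heq (-x.2)
      rw [neg_neg] at this
      rw [h2, h1]
      simp [boxAdd, hm, heq x.2, this]
    rw [h4, hχ1] at h3
    exact (inv_eq_of_mul_eq_one_right h3.symm).symm
  conv_lhs => rw [Xelem, Finset.sum_mul]
  simp [coeff_Xelem, hinv]

end
/-- **Dimension formula.** Let `A` and `C` be finite abelian groups of odd
order and `ψ` an equalized 2-cocycle, with `B_ψ` the group `A × C` with multiplication
`(a₁,c₁)·(a₂,c₂) = (a₁+a₂+ψ(c₁,c₂), c₁+c₂)`. For every coadjoint orbit `Ω`, the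
cardinality of `Ω` is a perfect square `n²`, the two-sided ideal `V_Ω` of `ℂ[B_ψ]` has
dimension `#Ω`, and `V_Ω` is isomorphic as a ℂ-algebra to the algebra of `n × n` complex
matrices (a multiplicative ℂ-linear equivalence); in particular the irreducible
representation corresponding to `Ω` has dimension `n = √(#Ω)`. -/
theorem dimension_formula {A C : Type*} [AddCommGroup A] [AddCommGroup C]
    [Fintype A] [Fintype C] [Group (A × C)]
    (hA : Odd (Fintype.card A)) (hC : Odd (Fintype.card C))
    (half : A → A) (hhalf : ∀ a : A, half a + half a = a)
    (ψ : C → C → A) (hψ : IsCocycle ψ) (heq : Equalized ψ)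
    (hmul : ∀ x y : A × C, x * y = (x.1 + y.1 + ψ x.2 y.2, x.2 + y.2))
    (Ω : Set (A × C → ℂˣ)) (hΩ : IsCoadjointOrbit half ψ Ω) :
    ∃ n : ℕ, Nat.card Ω = n ^ 2 ∧
      Module.finrank ℂ (Vorb Ω) = Nat.card Ω ∧
      ∃ e : (Vorb Ω) ≃ₗ[ℂ] Matrix (Fin n) (Fin n) ℂ,
        ∀ (x y : MonoidAlgebra ℂ (A × C)) (hx : x ∈ Vorb Ω) (hy : y ∈ Vorb Ω)
          (hxy : x * y ∈ Vorb Ω),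
          e ⟨x * y, hxy⟩ = e ⟨x, hx⟩ * e ⟨y, hy⟩ := by
  classical
  obtain ⟨χ₀, h0, hΩeq⟩ := hΩ
  obtain ⟨m, hm⟩ := half_eq hA hhalf
  have hch : ∀ χ ∈ Ω, IsChar half ψ χ := by
    rintro χ hχ
    rw [hΩeq] at hχ
    obtain ⟨b, rfl⟩ := hχ
    exact isChar_coact hψ h0 b
  have hcl : ∀ χ ∈ Ω, ∀ b, coact ψ b χ ∈ Ω := by
    rintro χ hχ d
    rw [hΩeq] at hχ ⊢
    obtain ⟨b, rfl⟩ := hχ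
    exact ⟨d + b, coact_coact hψ d b χ₀⟩
  have hfin : Finite Ω := by
    rw [hΩeq]
    have : {χ : A × C → ℂˣ | ∃ b : A × C, χ = coact ψ b χ₀} = Set.range (fun b => coact ψ b χ₀) := by
      ext χ; simp [eq_comm]
    rw [this]
    exact (Set.finite_range _).to_subtype
  have : Fintype Ω := Fintype.ofFinite Ω
  have hne : Nonempty Ω := ⟨⟨coact ψ 0 χ₀, by rw [hΩeq]; exact ⟨0, rfl⟩⟩⟩
  -- the central character
  obtain ⟨lam, hlam⟩ : ∃ lam : A → ℂˣ, ∀ a, lam a = χ₀ (a, 0) := ⟨_, fun _ => rfl⟩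
  have hadd : ∀ a a', lam (a + a') = lam a * lam a' := by
    intro a a'
    simp only [hlam]
    exact char_vert m hm hψ heq h0 a a' 0
  have hz : lam 0 = 1 := by
    have := hadd 0 0
    simpa using this
  have hneg : ∀ a, lam (-a) = (lam a)⁻¹ := by
    intro a
    have := hadd (-a) a
    rw [neg_add_cancel, hz] at this
    exact eq_inv_of_mul_eq_one_left this.symm
  have hns : ∀ (n : ℕ) a, lam (n • a) = lam a ^ n := by
    intro n a
    induction n with
    | zero => simp [hz]
    | succ k ih => rw [succ_nsmul, hadd, ih, pow_succ]
  have hco0 : ∀ d x, coact ψ d χ₀ x = (lam (eta ψ d.2 x.2))⁻¹ * χ₀ x := by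
    intro d x
    rw [← hneg, hlam, ← char_vert m hm hψ heq h0, coact]
    congr 2
    abel
  have hΩl : ∀ χ ∈ Ω, ∀ a, χ (a, 0) = lam a := by
    rintro χ hχ a
    rw [hΩeq] at hχ
    obtain ⟨b, rfl⟩ := hχ
    rw [hco0, hlam a, eta_swap, eta_zero_left hψ, neg_zero, hz, inv_one, one_mul]
  have hv : ∀ χ ∈ Ω, ∀ a a' c, χ (a + a', c) = lam a * χ (a', c) := by
    intro χ hχ a a' c
    rw [← hΩl χ hχ]
    exact char_vert m hm hψ heq (hch χ hχ) a a' c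
  have hco : ∀ χ ∈ Ω, ∀ d x, coact ψ d χ x = (lam (eta ψ d.2 x.2))⁻¹ * χ x := by
    intro χ hχ d x
    rw [← hneg, ← hv χ hχ, coact]
    congr 2
    abel
  -- left ideal
  have hX : ∀ χ ∈ Ω, Xelem χ ∈ Vorb Ω := fun χ hχ =>
    Submodule.subset_span (Set.mem_image_of_mem _ hχ)
  have hleft : ∀ x v : MonoidAlgebra ℂ (A × C), v ∈ Vorb Ω → x * v ∈ Vorb Ω := by
    intro x v hv
    have hs : ∀ b : A × C, MonoidAlgebra.single b (1 : ℂ) * v ∈ Vorb Ω := by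
      intro b
      induction hv using Submodule.span_induction with
      | mem y hy =>
        obtain ⟨χ, hχ, rfl⟩ := hy
        rw [single_mul_Xelem m hm hhalf hψ hmul (hch χ hχ)]
        exact Submodule.smul_mem _ _ (hX _ (hcl χ hχ _))
      | zero => rw [mul_zero]; exact Submodule.zero_mem _
      | add y z _ _ hy hz => rw [mul_add]; exact Submodule.add_mem _ hy hz
      | smul r y _ hy => rw [mul_smul_comm]; exact Submodule.smul_mem _ _ hy
    induction x using MonoidAlgebra.induction_on with
    | of b => exact hs b
    | add y z hy hz => rw [add_mul]; exact Submodule.add_mem _ hy hz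
    | smul r y hy => rw [smul_mul_assoc]; exact Submodule.smul_mem _ _ hy
  let V' : Submodule (MonoidAlgebra ℂ (A × C)) (MonoidAlgebra ℂ (A × C)) :=
    { carrier := Vorb Ω
      add_mem' := fun h1 h2 => Submodule.add_mem _ h1 h2
      zero_mem' := Submodule.zero_mem _
      smul_mem' := fun x v hv => hleft x v hv }
  obtain ⟨E, _, _, L, hLext, hLinv⟩ : ∃ (E : Type (max u_1 u_2)) (_ : Ring E) (_ : Algebra ℂ E)
      (L : MonoidAlgebra ℂ (A × C) →ₐ[ℂ] E),
      (∀ x y, (∀ χ ∈ Ω, x * Xelem χ = y * Xelem χ) → L x = L y) ∧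
      (∀ x, L x = 0 → ∀ χ ∈ Ω, x * Xelem χ = 0) := by
    let L : MonoidAlgebra ℂ (A × C) →ₐ[ℂ] Module.End ℂ V' := Algebra.lsmul ℂ ℂ V'
    have hLa : ∀ x (v : V'), ((L x v : V') : MonoidAlgebra ℂ (A × C)) = x * v := fun _ _ => rfl
    have hLext : ∀ x y, (∀ χ ∈ Ω, x * Xelem χ = y * Xelem χ) → L x = L y := by
      intro x y hxy
      ext1 ⟨v, hv⟩
      apply Subtype.ext
      rw [hLa, hLa]
      show x * v = y * v
      have hv' : v ∈ Vorb Ω := hv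
      clear hv
      induction hv' using Submodule.span_induction with
      | mem y hy =>
        obtain ⟨χ, hχ, rfl⟩ := hy
        exact hxy χ hχ
      | zero => simp
      | add y z _ _ hy hz => rw [mul_add, mul_add, hy, hz]
      | smul r y _ hy => rw [mul_smul_comm, mul_smul_comm, hy]
    refine ⟨Module.End ℂ V', inferInstance, inferInstance, L, hLext, ?_⟩
    intro x hx χ hχ
    have := hLa x ⟨Xelem χ, hX χ hχ⟩
    rw [hx] at this
    exact this.symm
  -- orthogonality
  have hcoef : ∀ (a : Ω → ℂ) (j : Ω), ((∑ i, a i • Xelem i.1) * Xelem j.1).coeff 1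
      = a j * (Fintype.card (A × C) : ℂ) := by
    intro a j
    have h1 : ∀ i : Ω, (Xelem i.1 * Xelem j.1).coeff 1
        = if i = j then (Fintype.card (A × C) : ℂ) else 0 := by
      intro i
      rw [coeff_mul_Xelem m hm hψ heq hmul (hch j.1 j.2)]
      split_ifs with hij
      · subst hij
        simp
      · exact char_orth (hch _ j.2) (hch _ i.2) (fun h => hij (Subtype.ext h))
    rw [Finset.sum_mul]
    simp only [smul_mul_assoc, MonoidAlgebra.coeff_sum, MonoidAlgebra.coeff_smul,
      Finsupp.coe_finsetSum, Finset.sum_apply, Finsupp.smul_apply, h1]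
    simp
  have hcard0 : (Fintype.card (A × C) : ℂ) ≠ 0 := by
    have : Nonempty (A × C) := ⟨(0, 0)⟩
    exact_mod_cast Fintype.card_ne_zero
  have hVr : Vorb Ω = Submodule.span ℂ (Set.range (fun i : Ω => Xelem i.1)) := by
    rw [Vorb, Set.image_eq_range]
  have hli : LinearIndependent ℂ (fun i : Ω => Xelem i.1) := by
    rw [Fintype.linearIndependent_iff]
    intro a ha j
    have := hcoef a j
    rw [ha] at this
    simpa [hcard0] using this
  have hfr : Module.finrank ℂ (Vorb Ω) = Fintype.card Ω := by
    rw [hVr]; exact finrank_span_eq_card hli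
  have hfdV : FiniteDimensional ℂ (Vorb Ω) := by
    rw [hVr]; exact FiniteDimensional.span_of_finite ℂ (Set.finite_range _)
  let P := L.rangeRestrict
  let Φ : Vorb Ω →ₗ[ℂ] L.range := P.toLinearMap ∘ₗ (Vorb Ω).subtype
  have hPext : ∀ x y, L x = L y → P x = P y := fun x y h => Subtype.ext h
  have hΦinj : Function.Injective Φ := by
    rw [← LinearMap.ker_eq_bot, LinearMap.ker_eq_bot']
    rintro ⟨v, hvV⟩ hv0
    have hL0 : L v = 0 := congrArg Subtype.val hv0
    have hmulz : ∀ χ ∈ Ω, v * Xelem χ = 0 := hLinv v hL0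
    have hvV' := hvV
    rw [hVr] at hvV'
    obtain ⟨a, rfl⟩ := (Submodule.mem_span_range_iff_exists_fun ℂ).1 hvV'
    apply Subtype.ext
    show ∑ i, a i • Xelem i.1 = 0
    refine Finset.sum_eq_zero fun j _ => ?_
    have := hcoef a j
    rw [hmulz j.1 j.2] at this
    have h2 : a j = 0 := by simpa [hcard0] using this
    rw [h2, zero_smul]
  have hntV : Nontrivial (Vorb Ω) :=
    Module.nontrivial_of_finrank_pos (R := ℂ) (by rw [hfr]; exact Fintype.card_pos)
  have hntR : Nontrivial L.range := hΦinj.nontrivial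
  -- group elements as units
  let g : (A × C) →* (L.range)ˣ :=
    MonoidHom.toHomUnits ((P : MonoidAlgebra ℂ (A × C) →* L.range).comp (MonoidAlgebra.of ℂ (A × C)))
  have hg : ∀ b, ((g b : (L.range)ˣ) : L.range) = P (MonoidAlgebra.single b 1) := fun b => rfl
  have hprop : ∀ b b₁ (s : ℂ), (∀ χ ∈ Ω, MonoidAlgebra.single b (1 : ℂ) * Xelem χ
      = s • (MonoidAlgebra.single b₁ (1 : ℂ) * Xelem χ)) →
      ((g b : (L.range)ˣ) : L.range) = s • ((g b₁ : (L.range)ˣ) : L.range) := by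
    intro b b₁ s h
    rw [hg, hg, ← map_smul]
    apply hPext
    apply hLext
    intro χ hχ
    rw [h χ hχ, smul_mul_assoc]
  have hr : ∀ i : Ω, ∃ b, i.1 = coact ψ b χ₀ := by
    rintro ⟨χ, hχ⟩
    rw [hΩeq] at hχ
    exact hχ
  choose r hr using hr
  have hspan : Submodule.span ℂ (Set.range (fun i : Ω => ((g (r i) : (L.range)ˣ) : L.range))) = ⊤ := by
    have hb : ∀ b, ((g b : (L.range)ˣ) : L.range) ∈
        Submodule.span ℂ (Set.range (fun i : Ω => ((g (r i) : (L.range)ˣ) : L.range))) := by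
      intro b
      let i : Ω := ⟨coact ψ b χ₀, by rw [hΩeq]; exact ⟨b, rfl⟩⟩
      have hi : coact ψ b χ₀ = coact ψ (r i) χ₀ := hr i
      generalize hb₁ : r i = b₁ at hi
      have hle : ∀ c, lam (eta ψ b.2 c) = lam (eta ψ b₁.2 c) := by
        intro c
        have := congrFun hi (0, c)
        rw [hco0, hco0] at this
        exact inv_injective (mul_right_cancel this)
      rw [hprop b b₁ (((χ₀ b)⁻¹ * χ₀ b₁ : ℂˣ) : ℂ)]
      · apply Submodule.smul_mem
        apply Submodule.subset_span
        exact ⟨i, by rw [← hb₁]⟩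
      · intro χ hχ
        rw [single_mul_Xelem m hm hhalf hψ hmul (hch χ hχ),
          single_mul_Xelem m hm hhalf hψ hmul (hch χ hχ), smul_smul]
        have e1 : coact ψ (0, m • b.2) χ = coact ψ (0, m • b₁.2) χ := by
          funext x
          rw [hco χ hχ, hco χ hχ]
          simp only [eta_nsmul_left hψ, hns, hle]
        rw [e1]
        congr 1
        rw [← Units.val_mul]
        congr 1
        rw [hΩeq] at hχ
        obtain ⟨d, rfl⟩ := hχ
        rw [hco0, hco0, eta_swap d.2 b.2, eta_swap d.2 b₁.2, hneg, hneg, hle]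
        rw [mul_inv, mul_inv, mul_comm _ (χ₀ b₁)⁻¹, mul_assoc (χ₀ b)⁻¹, mul_inv_cancel_left,
          mul_comm]
    rw [eq_top_iff]
    rintro ⟨_, x, rfl⟩ -
    show P x ∈ _
    induction x using MonoidAlgebra.induction_on with
    | of b => exact hb b
    | add y z hy hz => rw [map_add]; exact Submodule.add_mem _ hy hz
    | smul r y hy => rw [map_smul]; exact Submodule.smul_mem _ _ hy
  have hsimple : IsSimpleRing L.range := by
    refine simple_of_sep (fun i : Ω => g (r i)) (fun b => g b)
      (fun b i => (((lam (eta ψ b.2 (r i).2))⁻¹ : ℂˣ) : ℂ)) hspan ?_ ?_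
    · intro b i
      generalize r i = b₁
      rw [← Units.val_mul, ← Units.val_mul, ← map_mul, ← map_mul]
      apply hprop
      intro χ hχ
      rw [single_mul_Xelem m hm hhalf hψ hmul (hch χ hχ),
        single_mul_Xelem m hm hhalf hψ hmul (hch χ hχ), smul_smul]
      have e2 : (b * b₁).2 = (b₁ * b).2 := by
        rw [hmul, hmul]; exact add_comm _ _
      rw [e2]
      congr 1
      rw [← Units.val_mul]
      congr 1
      rw [← mul_inv]
      congr 1
      have e3 : b₁ * b = ((b₁ * b).1, (b₁ * b).2) := rfl
      rw [e3, ← hv χ hχ]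
      congr 1
      simp only [hmul, eta]
      ext
      · show _ = _
        abel
      · exact add_comm _ _
    · intro i j hij
      have : i.1 ≠ j.1 := fun h => hij (Subtype.ext h)
      obtain ⟨x, hx⟩ := Function.ne_iff.1 this
      refine ⟨x, fun h => hx ?_⟩
      have h' : lam (eta ψ x.2 (r i).2) = lam (eta ψ x.2 (r j).2) := inv_injective (Units.ext h)
      rw [hr i, hr j, hco0, hco0, eta_swap _ x.2, eta_swap _ x.2, hneg, hneg, h']
  have hfdR : FiniteDimensional ℂ L.range :=
    ⟨hspan ▸ Submodule.fg_span (Set.finite_range _)⟩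
  have hle : Module.finrank ℂ L.range ≤ Fintype.card Ω := by
    have := finrank_range_le_card (R := ℂ) (fun i : Ω => ((g (r i) : (L.range)ˣ) : L.range))
    rwa [Set.finrank, hspan, finrank_top] at this
  have hfeq : Module.finrank ℂ (Vorb Ω) = Module.finrank ℂ L.range :=
    le_antisymm (LinearMap.finrank_le_finrank_of_injective hΦinj) (hfr ▸ hle)
  obtain ⟨n, _, ⟨f⟩⟩ := IsSimpleRing.exists_algEquiv_matrix_of_isAlgClosed ℂ L.range
  have hn : Nat.card Ω = n ^ 2 := by
    rw [Nat.card_eq_fintype_card, ← hfr, hfeq, f.toLinearEquiv.finrank_eq, Module.finrank_matrix]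
    simp [sq]
  refine ⟨n, hn, by rw [hfr, Nat.card_eq_fintype_card],
    (LinearMap.linearEquivOfInjective Φ hΦinj hfeq).trans f.toLinearEquiv, ?_⟩
  intro x y hx hy hxy
  show f (P (x * y)) = f (P x) * f (P y)
  rw [map_mul, map_mul]
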